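/- Let p > q be distinct primes and G₁ = {(x₁,y₁,z₁,x₂,y₂,z₂) ∈ G×G : q·x₁ = p·x₂ and q·y₁ = p·y₂}. The map π : G₁ → G∗ defined by π(px, py, z₁, qx, qy, z₂) = (x, y, z₁ − z₂) (i.e. π(u₁,v₁,z₁,u₂,v₂,z₂) = (u₁/p, v₁/p, z₁−z₂)) is a surjective continuous group homomorphism from G₁ onto G∗ whose kernel is D = {(0,0,z,0,0,z) : z ∈ ℝ}; moreover π maps Γ₁ = G₁ ∩ (Γ×Γ) onto the subgroup Γ∗ of integer points of G∗. -/

import Mathlib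

noncomputable section
open Filter

/-- The generalized Heisenberg group: `ℝ³` with multiplication
`(x,y,z)·(x',y',z') = (x+x', y+y', z+z'+c(xy'−x'y))`.
The Heisenberg group `G` of the paper is `Heis 1`. -/
@[ext]
structure Heis (c : ℤ) where
  x : ℝ
  y : ℝ
  z : ℝ

namespace Heis
variable {c : ℤ}
instance : Mul (Heis c) :=
  ⟨fun a b => ⟨a.x + b.x, a.y + b.y, a.z + b.z + (c : ℝ) * (a.x * b.y - b.x * a.y)⟩⟩
instance : One (Heis c) := ⟨⟨0, 0, 0⟩⟩
instance : Inv (Heis c) := ⟨fun a => ⟨-a.x, -a.y, -a.z⟩⟩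
lemma mul_def (a b : Heis c) :
    a * b = ⟨a.x + b.x, a.y + b.y, a.z + b.z + (c : ℝ) * (a.x * b.y - b.x * a.y)⟩ := rfl
lemma one_def : (1 : Heis c) = ⟨0, 0, 0⟩ := rfl
lemma inv_def (a : Heis c) : a⁻¹ = ⟨-a.x, -a.y, -a.z⟩ := rfl
instance : Group (Heis c) where
  mul_assoc a b d := by ext <;> simp [mul_def] <;> ring
  one_mul a := by ext <;> simp [mul_def, one_def]
  mul_one a := by ext <;> simp [mul_def, one_def]
  inv_mul_cancel a := by ext <;> simp [mul_def, one_def, inv_def] <;> ring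
/-- The topology of `Heis c`, induced from `ℝ³`. -/
instance : TopologicalSpace (Heis c) :=
  TopologicalSpace.induced (fun a => (a.x, a.y, a.z)) inferInstance
/-- The lattice of integer points of `Heis c`  (the subgroup `Γ` when `c = 1`). -/
def latt (c : ℤ) : Subgroup (Heis c) where
  carrier := {a | ∃ m n k : ℤ, a = ⟨(m : ℝ), (n : ℝ), (k : ℝ)⟩}
  one_mem' := ⟨0, 0, 0, by ext <;> simp [one_def]⟩
  mul_mem' := by
    rintro a b ⟨m, n, k, rfl⟩ ⟨m', n', k', rfl⟩
    exact ⟨m + m', n + n', k + k' + c * (m * n' - m' * n), by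
      ext <;> simp [mul_def] <;> push_cast <;> ring⟩
  inv_mem' := by
    rintro a ⟨m, n, k, rfl⟩
    exact ⟨-m, -n, -k, by ext <;> simp [inv_def]⟩
end Heis

/-- The 3-dimensional Heisenberg nilmanifold `X = G/Γ` (the space of left cosets,
with the quotient topology). -/
abbrev HeisX : Type := Heis 1 ⧸ Heis.latt 1

/-- The circle `𝕋¹ = ℝ/ℤ`. -/
abbrev T1 : Type := AddCircle (1 : ℝ)

/-- The subgroup `G₁ = {(x₁,y₁,z₁,x₂,y₂,z₂) ∈ G×G : q(x₁,y₁) = p(x₂,y₂)}` of `G × G`. -/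
def HeisG1 (p q : ℕ) : Subgroup (Heis 1 × Heis 1) where
  carrier := {g | (q : ℝ) * g.1.x = (p : ℝ) * g.2.x ∧ (q : ℝ) * g.1.y = (p : ℝ) * g.2.y}
  one_mem' := by simp [Heis.one_def, Prod.fst_one, Prod.snd_one]
  mul_mem' := by
    rintro a b ⟨ha1, ha2⟩ ⟨hb1, hb2⟩
    constructor <;> simp only [Prod.fst_mul, Prod.snd_mul, Heis.mul_def] <;> ring_nf <;>
      nlinarith [ha1, ha2, hb1, hb2]
  inv_mem' := by
    rintro a ⟨ha1, ha2⟩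
    constructor <;> simp only [Prod.fst_inv, Prod.snd_inv, Heis.inv_def] <;> nlinarith [ha1, ha2]

/-- The subgroup `D = {(0,0,z,0,0,z) : z ∈ ℝ}` of `G₁`. -/
def HeisD (p q : ℕ) : Subgroup (HeisG1 p q) where
  carrier := {g | (g : Heis 1 × Heis 1).1.x = 0 ∧ (g : Heis 1 × Heis 1).1.y = 0 ∧
    (g : Heis 1 × Heis 1).2.x = 0 ∧ (g : Heis 1 × Heis 1).2.y = 0 ∧
    (g : Heis 1 × Heis 1).1.z = (g : Heis 1 × Heis 1).2.z}
  one_mem' := by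
    simp [Heis.one_def, Prod.fst_one, Prod.snd_one]
  mul_mem' := by
    rintro a b ⟨ha1, ha2, ha3, ha4, ha5⟩ ⟨hb1, hb2, hb3, hb4, hb5⟩
    refine ⟨?_, ?_, ?_, ?_, ?_⟩ <;>
      simp only [Subgroup.coe_mul, Prod.fst_mul, Prod.snd_mul, Heis.mul_def,
        ha1, ha2, ha3, ha4, ha5, hb1, hb2, hb3, hb4, hb5] <;> ring
  inv_mem' := by
    rintro a ⟨ha1, ha2, ha3, ha4, ha5⟩
    refine ⟨?_, ?_, ?_, ?_, ?_⟩ <;>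
      simp only [Subgroup.coe_inv, Prod.fst_inv, Prod.snd_inv, Heis.inv_def,
        ha1, ha2, ha3, ha4, ha5] <;> ring

/-- The underlying function of the projection `π : G₁ → G∗`,
`π(u₁,v₁,z₁,u₂,v₂,z₂) = (u₁/p, v₁/p, z₁−z₂)`; here `G∗ = Heis (p²−q²)`. -/
def piFun (p q : ℕ) : HeisG1 p q → Heis ((p : ℤ) ^ 2 - (q : ℤ) ^ 2) := fun g =>
  ⟨(g : Heis 1 × Heis 1).1.x / p, (g : Heis 1 × Heis 1).1.y / p,
    (g : Heis 1 × Heis 1).1.z - (g : Heis 1 × Heis 1).2.z⟩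

/-!
In the coordinates `(px, py, z, qx, qy, w)` of `G₁`, the central terms of a product are
`p²(xy' − x'y)` in the first factor and `q²(xy' − x'y)` in the second, so the difference `z − w`
picks up exactly the twist `p² − q²` of `G∗`. Such a point is integral iff `x, y, z, w` are:
if `px` and `qx` are integers and `p, q` are coprime, Bézout makes `x` an integer.
-/

theorem mem_of_nsmul_mem_of_coprime {A S : Type*} [AddGroup A] [SetLike S A]
    [AddSubgroupClass S A] {s : S} {m n : ℕ} (hmn : m.Coprime n) {a : A}
    (hm : m • a ∈ s) (hn : n • a ∈ s) : a ∈ s := by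
  obtain ⟨u, v, huv⟩ := Nat.isCoprime_iff_coprime.2 hmn
  have bezout : a = u • m • a + v • n • a := by
    rw [← natCast_zsmul a m, ← natCast_zsmul a n, ← mul_zsmul, ← mul_zsmul, ← add_zsmul, huv,
      one_zsmul]
  rw [bezout]
  exact add_mem (zsmul_mem hm u) (zsmul_mem hn v)

namespace Heis

variable {c : ℤ}

theorem continuous_coords : Continuous fun a : Heis c => (a.x, a.y, a.z) :=
  continuous_induced_dom

@[fun_prop]
theorem continuous_x : Continuous (x : Heis c → ℝ) :=
  continuous_coords.fst

@[fun_prop]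
theorem continuous_y : Continuous (y : Heis c → ℝ) :=
  continuous_coords.snd.fst

@[fun_prop]
theorem continuous_z : Continuous (z : Heis c → ℝ) :=
  continuous_coords.snd.snd

theorem continuous_mk {X : Type*} [TopologicalSpace X] {u v w : X → ℝ}
    (hu : Continuous u) (hv : Continuous v) (hw : Continuous w) :
    Continuous fun t => (⟨u t, v t, w t⟩ : Heis c) :=
  continuous_induced_rng.2 (hu.prodMk (hv.prodMk hw))

theorem mem_latt {a : Heis c} :
    a ∈ latt c ↔ a.x ∈ (Int.castRingHom ℝ).range ∧ a.y ∈ (Int.castRingHom ℝ).range ∧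
      a.z ∈ (Int.castRingHom ℝ).range := by
  constructor
  · rintro ⟨m, n, k, rfl⟩
    exact ⟨⟨m, rfl⟩, ⟨n, rfl⟩, ⟨k, rfl⟩⟩
  · rintro ⟨⟨m, hm⟩, ⟨n, hn⟩, ⟨k, hk⟩⟩
    exact ⟨m, n, k, Heis.ext hm.symm hn.symm hk.symm⟩

end Heis

namespace HeisG1

/-- The point `(px, py, z, qx, qy, w)` of `G₁`; these are the coordinates in which the paper
defines `π`. -/
def ofCoords (p q : ℕ) (x y z w : ℝ) : HeisG1 p q :=
  ⟨(⟨p * x, p * y, z⟩, ⟨q * x, q * y, w⟩), mul_left_comm _ _ _, mul_left_comm _ _ _⟩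

/-- The subgroup `Γ₁ = G₁ ∩ (Γ × Γ)` of integer points of `G₁`. -/
abbrev latt (p q : ℕ) : Subgroup (HeisG1 p q) :=
  ((Heis.latt 1).prod (Heis.latt 1)).subgroupOf (HeisG1 p q)

variable {p q : ℕ}

theorem exists_eq_ofCoords (hp : p ≠ 0) (g : HeisG1 p q) :
    ∃ x y z w, g = ofCoords p q x y z w := by
  obtain ⟨⟨⟨x₁, y₁, z₁⟩, ⟨x₂, y₂, z₂⟩⟩, hx : q * x₁ = p * x₂, hy : q * y₁ = p * y₂⟩ := g
  have hp' : (p : ℝ) ≠ 0 := Nat.cast_ne_zero.2 hp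
  refine ⟨x₁ / p, y₁ / p, z₁, z₂, Subtype.ext (Prod.ext (Heis.ext ?_ ?_ rfl) (Heis.ext ?_ ?_ rfl))⟩
  · exact (mul_div_cancel₀ x₁ hp').symm
  · exact (mul_div_cancel₀ y₁ hp').symm
  · change x₂ = q * (x₁ / p)
    rw [← mul_div_assoc, hx, mul_div_cancel_left₀ x₂ hp']
  · change y₂ = q * (y₁ / p)
    rw [← mul_div_assoc, hy, mul_div_cancel_left₀ y₂ hp']

theorem ofCoords_mul_ofCoords (x y z w x' y' z' w' : ℝ) :
    ofCoords p q x y z w * ofCoords p q x' y' z' w' =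
      ofCoords p q (x + x') (y + y') (z + z' + (p : ℝ) ^ 2 * (x * y' - x' * y))
        (w + w' + (q : ℝ) ^ 2 * (x * y' - x' * y)) := by
  refine Subtype.ext (Prod.ext ?_ ?_) <;>
    ext <;> simp only [ofCoords, Subgroup.coe_mul, Prod.mk_mul_mk, Heis.mul_def] <;>
    push_cast <;> ring

theorem ofCoords_mem_HeisD_iff (hp : p ≠ 0) {x y z w : ℝ} :
    ofCoords p q x y z w ∈ HeisD p q ↔ x = 0 ∧ y = 0 ∧ z = w := by
  change (p : ℝ) * x = 0 ∧ (p : ℝ) * y = 0 ∧ (q : ℝ) * x = 0 ∧ (q : ℝ) * y = 0 ∧ z = w ↔ _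
  have hp' : (p : ℝ) ≠ 0 := Nat.cast_ne_zero.2 hp
  simp only [mul_eq_zero, hp', false_or]
  tauto

theorem ofCoords_mem_latt_iff (hpq : p.Coprime q) {x y z w : ℝ} :
    ofCoords p q x y z w ∈ latt p q ↔
      x ∈ (Int.castRingHom ℝ).range ∧ y ∈ (Int.castRingHom ℝ).range ∧
        z ∈ (Int.castRingHom ℝ).range ∧ w ∈ (Int.castRingHom ℝ).range := by
  have mem_iff (t : ℝ) : (p * t ∈ (Int.castRingHom ℝ).range ∧ q * t ∈ (Int.castRingHom ℝ).range) ↔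
      t ∈ (Int.castRingHom ℝ).range := by
    simp only [← nsmul_eq_mul]
    exact ⟨fun h => mem_of_nsmul_mem_of_coprime hpq h.1 h.2,
      fun h => ⟨nsmul_mem h p, nsmul_mem h q⟩⟩
  rw [Subgroup.mem_subgroupOf, Subgroup.mem_prod, Heis.mem_latt, Heis.mem_latt, ← mem_iff x,
    ← mem_iff y]
  simp only [ofCoords]
  tauto

end HeisG1

section Projection

open HeisG1

variable {p q : ℕ}

theorem piFun_ofCoords (hp : p ≠ 0) (x y z w : ℝ) :
    piFun p q (ofCoords p q x y z w) = ⟨x, y, z - w⟩ := by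
  have hp' : (p : ℝ) ≠ 0 := Nat.cast_ne_zero.2 hp
  exact Heis.ext (mul_div_cancel_left₀ x hp') (mul_div_cancel_left₀ y hp') rfl

theorem piFun_mul (hp : p ≠ 0) (g h : HeisG1 p q) :
    piFun p q (g * h) = piFun p q g * piFun p q h := by
  obtain ⟨x, y, z, w, rfl⟩ := exists_eq_ofCoords hp g
  obtain ⟨x', y', z', w', rfl⟩ := exists_eq_ofCoords hp h
  simp only [ofCoords_mul_ofCoords, piFun_ofCoords hp, Heis.mul_def, Heis.mk.injEq, true_and]
  push_cast
  ring

theorem continuous_piFun (p q : ℕ) : Continuous (piFun p q) := by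
  apply Heis.continuous_mk <;> fun_prop

/-- The projection `π : G₁ → G∗` as a group homomorphism. -/
def piHom (q : ℕ) (hp : p ≠ 0) : HeisG1 p q →* Heis ((p : ℤ) ^ 2 - (q : ℤ) ^ 2) :=
  MonoidHom.mk' (piFun p q) (piFun_mul hp)

theorem piHom_ofCoords (hp : p ≠ 0) (x y z w : ℝ) :
    piHom q hp (ofCoords p q x y z w) = ⟨x, y, z - w⟩ :=
  piFun_ofCoords hp x y z w

theorem piHom_surjective (hp : p ≠ 0) : Function.Surjective (piHom q hp) := fun a =>
  ⟨ofCoords p q a.x a.y a.z 0, by rw [piHom_ofCoords, sub_zero]⟩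

theorem ker_piHom (hp : p ≠ 0) : (piHom q hp).ker = HeisD p q := by
  ext g
  obtain ⟨x, y, z, w, rfl⟩ := exists_eq_ofCoords hp g
  rw [MonoidHom.mem_ker, piHom_ofCoords, ofCoords_mem_HeisD_iff hp, Heis.one_def, Heis.mk.injEq,
    sub_eq_zero]

theorem map_piHom_latt (hp : p ≠ 0) (hpq : p.Coprime q) :
    (HeisG1.latt p q).map (piHom q hp) = Heis.latt ((p : ℤ) ^ 2 - (q : ℤ) ^ 2) := by
  apply le_antisymm
  · rintro _ ⟨g, hg, rfl⟩
    obtain ⟨x, y, z, w, rfl⟩ := exists_eq_ofCoords hp g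
    obtain ⟨hx, hy, hz, hw⟩ := (ofCoords_mem_latt_iff hpq).1 hg
    rw [piHom_ofCoords, Heis.mem_latt]
    exact ⟨hx, hy, sub_mem hz hw⟩
  · intro a ha
    obtain ⟨hx, hy, hz⟩ := Heis.mem_latt.1 ha
    refine ⟨ofCoords p q a.x a.y a.z 0, ?_, ?_⟩
    · exact (ofCoords_mem_latt_iff hpq).2 ⟨hx, hy, hz, zero_mem _⟩
    · rw [piHom_ofCoords, sub_zero]

end Projection

theorem stmt6_general (p q : ℕ) (hp : p ≠ 0) (hpq : p.Coprime q) :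
    ∃ φ : HeisG1 p q →* Heis ((p : ℤ) ^ 2 - (q : ℤ) ^ 2),
      ⇑φ = piFun p q ∧
      Continuous φ ∧
      Function.Surjective φ ∧
      φ.ker = HeisD p q ∧
      Subgroup.map φ (((Heis.latt 1).prod (Heis.latt 1)).subgroupOf (HeisG1 p q)) =
        Heis.latt ((p : ℤ) ^ 2 - (q : ℤ) ^ 2) :=
  ⟨piHom q hp, rfl, continuous_piFun p q, piHom_surjective hp, ker_piHom hp,
    map_piHom_latt hp hpq⟩

/-- The map `π(px,py,z₁,qx,qy,z₂) = (x,y,z₁−z₂)` is a surjective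
continuous group homomorphism from `G₁` onto `G∗` with kernel
`D = {(0,0,z,0,0,z) : z ∈ ℝ}`, and `π` maps `Γ₁ = G₁ ∩ (Γ×Γ)` onto the subgroup `Γ∗` of
integer points of `G∗`. -/
theorem stmt6 (p q : ℕ) (hp : p.Prime) (hq : q.Prime) (hpq : q < p) :
    ∃ φ : HeisG1 p q →* Heis ((p : ℤ) ^ 2 - (q : ℤ) ^ 2),
      ⇑φ = piFun p q ∧
      Continuous φ ∧
      Function.Surjective φ ∧
      φ.ker = HeisD p q ∧
      Subgroup.map φ (((Heis.latt 1).prod (Heis.latt 1)).subgroupOf (HeisG1 p q)) =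
        Heis.latt ((p : ℤ) ^ 2 - (q : ℤ) ^ 2) :=
  stmt6_general p q hp.ne_zero ((Nat.coprime_primes hp hq).2 hpq.ne')
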